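/- For every edge e of the graph, there exists a unique bounded linear operator T_e on L²(X,μ) such that for every φ ∈ L²(X,μ), T_e φ agrees μ-almost everywhere with the function equal to Φ_{f_e⁻¹}(x)^{1/2}·φ(f_e⁻¹(x)) for x ∈ R_e and equal to 0 for x ∉ R_e. Moreover, for every φ ∈ L²(X,μ) one has ‖T_e φ‖² = ∫_{D_{r(e)}} |φ|² dμ, and the operator identity T_e* T_e = M_{χ_{D_{r(e)}}} holds, where M_{χ_{D_{r(e)}}} denotes the operator of multiplication by the indicator function of D_{r(e)}. -/

import Mathlib

/-!
Integrating against `Φ_{f_e⁻¹} dμ` is integrating against the image of `μ|_{D_{r(e)}}` under `f_e`.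
Since `f_e⁻¹ ∘ f_e = id`, the factor `Φ_{f_e⁻¹}` in `⟪T_e φ, T_e ψ⟫` therefore disappears after a
change of variables: `⟪T_e φ, T_e ψ⟫ = ∫_{D_{r(e)}} ⟪φ, ψ⟫ dμ`. The norm formula, hence boundedness,
is the case `φ = ψ`, and the formula for `T_e* T_e` is the same identity read weakly.
-/

open MeasureTheory Set
open scoped ENNReal NNReal

section

variable {V0 E1 X : Type*}

/-- A relative `G`-branching system, relative to a set `V` of vertices, on a measure space
`(X, μ)`, for a directed graph with vertices `V0`, edges `E1`, range map `r` and source map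
`s`. The data consists of measurable sets `R e` (for edges) and `D v` (for vertices),
together with measurable maps `f e : D (r e) → R e` and `finv e : R e → D (r e)` that are
mutually inverse `μ`-a.e. and whose pushforward measures are absolutely continuous w.r.t.
`μ`. -/
structure RelBranchingSystem [MeasurableSpace X] (r s : E1 → V0) (V : Set V0)
    (μ : Measure X) (R : E1 → Set X) (D : V0 → Set X) (f finv : E1 → X → X) : Prop where
  measR : ∀ e, MeasurableSet (R e)
  measD : ∀ v, MeasurableSet (D v)
  measf : ∀ e, Measurable (f e)
  measfinv : ∀ e, Measurable (finv e)
  disjR : ∀ e e', e ≠ e' → μ (R e ∩ R e') = 0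
  disjD : ∀ u v, u ≠ v → μ (D u ∩ D v) = 0
  RsubD : ∀ e, μ (R e \ D (s e)) = 0
  CK : ∀ v ∈ V, (∃ e, s e = v) → μ (symmDiff (D v) (⋃ e ∈ {e' | s e' = v}, R e)) = 0
  mapsf : ∀ e, MapsTo (f e) (D (r e)) (R e)
  mapsfinv : ∀ e, MapsTo (finv e) (R e) (D (r e))
  inv_right : ∀ e, ∀ᵐ x ∂μ.restrict (R e), f e (finv e x) = x
  inv_left : ∀ e, ∀ᵐ t ∂μ.restrict (D (r e)), finv e (f e t) = t
  ac_f : ∀ e, (μ.restrict (D (r e))).map (f e) ≪ μ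
  ac_finv : ∀ e, (μ.restrict (R e)).map (finv e) ≪ μ

/-- The Radon–Nikodym derivative of the pushforward of `μ` restricted to `S` under `h`,
with respect to `μ`.  Taking `S = D (r e)`, `h = f e` gives `Φ_{f_e⁻¹}`, and taking
`S = R e`, `h = finv e` gives `Φ_{f_e}`. -/
noncomputable def pushDeriv [MeasurableSpace X] (μ : Measure X) (S : Set X) (h : X → X) :
    X → ℝ≥0∞ :=
  ((μ.restrict S).map h).rnDeriv μ

/-- The function `x ↦ χ_{R e}(x) · Φ_{f_e⁻¹}(x)^{1/2} · φ(f_e⁻¹ x)`, i.e. the prospective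
action of the partial isometry `T_e` on a function `φ`. -/
noncomputable def Taction [MeasurableSpace X] (μ : Measure X) (Re DRe : Set X)
    (fe finve : X → X) (φ : X → ℂ) : X → ℂ :=
  Re.indicator fun x => (Real.sqrt ((pushDeriv μ DRe fe x).toReal) : ℂ) * φ (finve x)

/-- The weighted composition operator `φ ↦ χ_R · w^{1/2} · (φ ∘ g)` on functions with values in an
inner product space. It is definitionally `Taction` for `𝕜 = E = ℂ` and `w = Φ_{f_e⁻¹}`. -/
noncomputable def weightedComp {Y E : Type*} (𝕜 : Type*) [RCLike 𝕜] [NormedAddCommGroup E]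
    [InnerProductSpace 𝕜 E] (w : X → ℝ≥0∞) (R : Set X) (g : X → Y) (φ : Y → E) : X → E :=
  R.indicator fun x => ((√(w x).toReal : ℝ) : 𝕜) • φ (g x)

section Pointwise

variable {𝕜 Y E : Type*} [RCLike 𝕜] [NormedAddCommGroup E] [InnerProductSpace 𝕜 E]
  (w : X → ℝ≥0∞) (R : Set X) (g : X → Y)

theorem weightedComp_add (φ ψ : Y → E) :
    weightedComp 𝕜 w R g (φ + ψ) = weightedComp 𝕜 w R g φ + weightedComp 𝕜 w R g ψ := by
  simp only [weightedComp, Pi.add_apply, smul_add]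
  exact indicator_add R _ _

theorem weightedComp_smul (c : 𝕜) (φ : Y → E) :
    weightedComp 𝕜 w R g (c • φ) = c • weightedComp 𝕜 w R g φ := by
  simp only [weightedComp, Pi.smul_apply, smul_comm _ c]
  exact indicator_const_smul R c _

theorem inner_weightedComp (φ ψ : Y → E) (x : X) :
    inner 𝕜 (weightedComp 𝕜 w R g φ x) (weightedComp 𝕜 w R g ψ x) =
      (w x).toReal • R.indicator (fun x => inner 𝕜 (φ (g x)) (ψ (g x))) x := by
  by_cases hx : x ∈ R
  · simp only [weightedComp, indicator_of_mem hx, inner_smul_left, inner_smul_right,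
      RCLike.conj_ofReal, ← mul_assoc, ← RCLike.ofReal_mul,
      Real.mul_self_sqrt ENNReal.toReal_nonneg, RCLike.real_smul_eq_coe_mul]
  · simp only [weightedComp, indicator_of_notMem hx, inner_zero_left, smul_zero]

theorem norm_sq_weightedComp (φ : Y → E) (x : X) :
    ‖weightedComp 𝕜 w R g φ x‖ ^ 2 =
      (w x).toReal • R.indicator (fun x => ‖φ (g x)‖ ^ 2) x := by
  by_cases hx : x ∈ R
  · simp only [weightedComp, indicator_of_mem hx, norm_smul, RCLike.norm_ofReal, mul_pow, sq_abs,
      Real.sq_sqrt ENNReal.toReal_nonneg, smul_eq_mul]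
  · simp only [weightedComp, indicator_of_notMem hx, norm_zero, smul_zero, zero_pow two_ne_zero]

end Pointwise

section ChangeOfVariables

variable {Y G : Type*} [MeasurableSpace Y] {ν : Measure Y} {f : Y → X} {g : X → Y}

theorem indicator_comp_ae_eq_of_ae_leftInverse [Zero G] {R : Set X} (hfR : ∀ᵐ y ∂ν, f y ∈ R)
    (hgf : ∀ᵐ y ∂ν, g (f y) = y) (k : Y → G) :
    (fun y => R.indicator (fun x => k (g x)) (f y)) =ᵐ[ν] k := by
  filter_upwards [hfR, hgf] with y hyR hy
  rw [indicator_of_mem hyR, hy]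

variable [MeasurableSpace X]

theorem sigmaFinite_map_of_ae_leftInverse [SigmaFinite ν] (hf : AEMeasurable f ν)
    (hg : AEMeasurable g (ν.map f)) (hgf : ∀ᵐ y ∂ν, g (f y) = y) : SigmaFinite (ν.map f) := by
  have map_map_eq : (ν.map f).map g = ν := by
    have comp_ae_eq_id : g ∘ f =ᵐ[ν] id := hgf
    rw [AEMeasurable.map_map_of_aemeasurable hg hf, Measure.map_congr comp_ae_eq_id, Measure.map_id]
  exact SigmaFinite.of_map _ hg (map_map_eq.symm ▸ inferInstance)

variable {μ : Measure X} [SigmaFinite μ] [SigmaFinite (ν.map f)] [NormedAddCommGroup G]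
  [NormedSpace ℝ G]

theorem integral_rnDeriv_map_smul (hf : Measure.QuasiMeasurePreserving f ν μ) {F : X → G}
    (hF : AEStronglyMeasurable F μ) :
    ∫ x, ((ν.map f).rnDeriv μ x).toReal • F x ∂μ = ∫ y, F (f y) ∂ν := by
  rw [integral_rnDeriv_smul hf.absolutelyContinuous,
    integral_map hf.aemeasurable (hF.mono_ac hf.absolutelyContinuous)]

theorem integrable_rnDeriv_map_smul_iff (hf : Measure.QuasiMeasurePreserving f ν μ) {F : X → G}
    (hF : AEStronglyMeasurable F μ) :
    Integrable (fun x => ((ν.map f).rnDeriv μ x).toReal • F x) μ ↔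
      Integrable (fun y => F (f y)) ν := by
  rw [integrable_rnDeriv_smul_iff hf.absolutelyContinuous,
    integrable_map_measure (hF.mono_ac hf.absolutelyContinuous) hf.aemeasurable]
  rfl

end ChangeOfVariables

section L2

theorem Lp_two_norm_sq_eq_integral_norm_sq {Y E : Type*} [MeasurableSpace Y] {ν : Measure Y}
    [NormedAddCommGroup E] (φ : Lp E 2 ν) : ‖φ‖ ^ 2 = ∫ y, ‖φ y‖ ^ 2 ∂ν := by
  rw [Lp.norm_def, toReal_eLpNorm (Lp.aestronglyMeasurable φ),
    lpNorm_eq_integral_norm_rpow_toReal two_ne_zero ENNReal.ofNat_ne_top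
      (Lp.aestronglyMeasurable φ)]
  simp only [ENNReal.toReal_ofNat, Real.rpow_two]
  exact Real.rpow_inv_natCast_pow (integral_nonneg fun y => sq_nonneg ‖φ y‖) two_ne_zero

variable {𝕜 Y E : Type*} [RCLike 𝕜] [NormedAddCommGroup E] [InnerProductSpace 𝕜 E]
  [MeasurableSpace Y]

theorem integral_inner_self_eq_integral_norm_sq (ν : Measure Y) (φ : Y → E) :
    ∫ y, inner 𝕜 (φ y) (φ y) ∂ν = ((∫ y, ‖φ y‖ ^ 2 ∂ν : ℝ) : 𝕜) := by
  simp only [← integral_ofReal, inner_self_eq_norm_sq_to_K, RCLike.ofReal_pow]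

theorem inner_toLp_indicator {ν : Measure Y} {D : Set Y} (hD : MeasurableSet D) {φ : Y → E}
    (hφ : MemLp (D.indicator φ) 2 ν) (ψ : Lp E 2 ν) :
    inner 𝕜 (hφ.toLp _) ψ = ∫ y in D, inner 𝕜 (φ y) (ψ y) ∂ν := by
  rw [L2.inner_def, ← integral_indicator hD]
  refine integral_congr_ae ?_
  filter_upwards [hφ.coeFn_toLp] with y hy
  by_cases hyD : y ∈ D
  · rw [hy, indicator_of_mem hyD, indicator_of_mem hyD]
  · rw [hy, indicator_of_notMem hyD, indicator_of_notMem hyD, inner_zero_left]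

end L2

/-- A nonsingular map `f` from `D ⊆ Y` to `R ⊆ X` with a nonsingular `g` on `R` that is a left
inverse of `f` almost everywhere on `D`. Both maps are total and measurable, but the
other conditions only see `f` on `D` and `g` on `R`. An edge `e` of a branching system gives
`R = R_e`, `D = D_{r(e)}`, `f = f_e`, `g = f_e⁻¹`. -/
structure IsNonsingularSection {Y : Type*} [MeasurableSpace X] [MeasurableSpace Y]
    (μ : Measure X) (ν : Measure Y) (R : Set X) (D : Set Y) (f : Y → X) (g : X → Y) : Prop where
  measurableSet_range : MeasurableSet R
  measurableSet_domain : MeasurableSet D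
  quasiMeasurePreserving : Measure.QuasiMeasurePreserving f (ν.restrict D) μ
  quasiMeasurePreserving_inverse : Measure.QuasiMeasurePreserving g (μ.restrict R) ν
  ae_mem_range : ∀ᵐ y ∂ν.restrict D, f y ∈ R
  ae_leftInverse : ∀ᵐ y ∂ν.restrict D, g (f y) = y

namespace IsNonsingularSection

variable {𝕜 Y E G : Type*} [RCLike 𝕜] [NormedAddCommGroup E] [InnerProductSpace 𝕜 E]
  [MeasurableSpace X] [MeasurableSpace Y] {μ : Measure X} {ν : Measure Y}
  {R : Set X} {D : Set Y} {f : Y → X} {g : X → Y}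

theorem sigmaFinite_map [SigmaFinite ν] (h : IsNonsingularSection μ ν R D f g) :
    SigmaFinite ((ν.restrict D).map f) :=
  sigmaFinite_map_of_ae_leftInverse h.quasiMeasurePreserving.aemeasurable
    h.quasiMeasurePreserving_inverse.measurable.aemeasurable h.ae_leftInverse

theorem aestronglyMeasurable_indicator_comp [TopologicalSpace G] [Zero G]
    (h : IsNonsingularSection μ ν R D f g) {k : Y → G} (hk : AEStronglyMeasurable k ν) :
    AEStronglyMeasurable (R.indicator fun x => k (g x)) μ :=
  (aestronglyMeasurable_indicator_iff h.measurableSet_range).2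
    (hk.comp_quasiMeasurePreserving h.quasiMeasurePreserving_inverse)

theorem weightedComp_congr_ae (h : IsNonsingularSection μ ν R D f g) (w : X → ℝ≥0∞) {φ ψ : Y → E}
    (hφψ : φ =ᵐ[ν] ψ) : weightedComp 𝕜 w R g φ =ᵐ[μ] weightedComp 𝕜 w R g ψ := by
  have comp_ae_eq : ∀ᵐ x ∂μ.restrict R, φ (g x) = ψ (g x) :=
    h.quasiMeasurePreserving_inverse.ae hφψ
  filter_upwards [(ae_restrict_iff' h.measurableSet_range).1 comp_ae_eq] with x hx
  by_cases hxR : x ∈ R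
  · simp only [weightedComp, indicator_of_mem hxR, hx hxR]
  · simp only [weightedComp, indicator_of_notMem hxR]

theorem aestronglyMeasurable_weightedComp (h : IsNonsingularSection μ ν R D f g) {w : X → ℝ≥0∞}
    (hw : Measurable w) {φ : Y → E} (hφ : AEStronglyMeasurable φ ν) :
    AEStronglyMeasurable (weightedComp 𝕜 w R g φ) μ := by
  have measurable_sqrt : Measurable fun x => ((√(w x).toReal : ℝ) : 𝕜) := by fun_prop
  rw [weightedComp, indicator_smul]
  exact measurable_sqrt.aestronglyMeasurable.smul (h.aestronglyMeasurable_indicator_comp hφ)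

variable [SigmaFinite μ] [SigmaFinite ν]

theorem integral_rnDeriv_smul_indicator_comp [NormedAddCommGroup G] [NormedSpace ℝ G]
    (h : IsNonsingularSection μ ν R D f g) {k : Y → G} (hk : AEStronglyMeasurable k ν) :
    ∫ x, (((ν.restrict D).map f).rnDeriv μ x).toReal • R.indicator (fun x => k (g x)) x ∂μ =
      ∫ y in D, k y ∂ν := by
  have := h.sigmaFinite_map
  rw [integral_rnDeriv_map_smul h.quasiMeasurePreserving (h.aestronglyMeasurable_indicator_comp hk)]
  exact integral_congr_ae
    (indicator_comp_ae_eq_of_ae_leftInverse h.ae_mem_range h.ae_leftInverse k)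

theorem integrable_rnDeriv_smul_indicator_comp_iff [NormedAddCommGroup G] [NormedSpace ℝ G]
    (h : IsNonsingularSection μ ν R D f g) {k : Y → G} (hk : AEStronglyMeasurable k ν) :
    Integrable (fun x => (((ν.restrict D).map f).rnDeriv μ x).toReal •
      R.indicator (fun x => k (g x)) x) μ ↔ IntegrableOn k D ν := by
  have := h.sigmaFinite_map
  rw [integrable_rnDeriv_map_smul_iff h.quasiMeasurePreserving
    (h.aestronglyMeasurable_indicator_comp hk)]
  exact integrable_congr
    (indicator_comp_ae_eq_of_ae_leftInverse h.ae_mem_range h.ae_leftInverse k)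

theorem memLp_weightedComp (h : IsNonsingularSection μ ν R D f g) {φ : Y → E}
    (hφ : MemLp φ 2 ν) :
    MemLp (weightedComp 𝕜 (((ν.restrict D).map f).rnDeriv μ) R g φ) 2 μ := by
  rw [memLp_two_iff_integrable_sq_norm
    (h.aestronglyMeasurable_weightedComp (Measure.measurable_rnDeriv _ _) hφ.1)]
  simp only [norm_sq_weightedComp]
  rw [h.integrable_rnDeriv_smul_indicator_comp_iff (k := fun y => ‖φ y‖ ^ 2) (hφ.1.norm.pow 2)]
  exact ((memLp_two_iff_integrable_sq_norm hφ.1).1 hφ).integrableOn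

theorem inner_eq_setIntegral_inner (h : IsNonsingularSection μ ν R D f g) {φ ψ : Lp E 2 ν}
    {φ' ψ' : Lp E 2 μ}
    (hφ : φ' =ᵐ[μ] weightedComp 𝕜 (((ν.restrict D).map f).rnDeriv μ) R g φ)
    (hψ : ψ' =ᵐ[μ] weightedComp 𝕜 (((ν.restrict D).map f).rnDeriv μ) R g ψ) :
    inner 𝕜 φ' ψ' = ∫ y in D, inner 𝕜 (φ y) (ψ y) ∂ν := by
  rw [L2.inner_def, ← h.integral_rnDeriv_smul_indicator_comp
    ((Lp.aestronglyMeasurable φ).inner (Lp.aestronglyMeasurable ψ))]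
  refine integral_congr_ae ?_
  filter_upwards [hφ, hψ] with x hφx hψx
  rw [hφx, hψx, inner_weightedComp]

theorem norm_sq_eq_setIntegral_norm_sq (h : IsNonsingularSection μ ν R D f g) {φ : Lp E 2 ν}
    {φ' : Lp E 2 μ}
    (hφ : φ' =ᵐ[μ] weightedComp 𝕜 (((ν.restrict D).map f).rnDeriv μ) R g φ) :
    ‖φ'‖ ^ 2 = ∫ y in D, ‖φ y‖ ^ 2 ∂ν := by
  rw [← inner_self_eq_norm_sq (𝕜 := 𝕜), h.inner_eq_setIntegral_inner hφ hφ,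
    integral_inner_self_eq_integral_norm_sq, RCLike.ofReal_re]

theorem norm_le_of_ae_eq_weightedComp (h : IsNonsingularSection μ ν R D f g) {φ : Lp E 2 ν}
    {φ' : Lp E 2 μ}
    (hφ : φ' =ᵐ[μ] weightedComp 𝕜 (((ν.restrict D).map f).rnDeriv μ) R g φ) :
    ‖φ'‖ ≤ ‖φ‖ := by
  refine le_of_sq_le_sq ?_ (norm_nonneg φ)
  calc ‖φ'‖ ^ 2 = ∫ y in D, ‖φ y‖ ^ 2 ∂ν := h.norm_sq_eq_setIntegral_norm_sq hφ
    _ ≤ ∫ y, ‖φ y‖ ^ 2 ∂ν :=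
      setIntegral_le_integral
        ((memLp_two_iff_integrable_sq_norm (Lp.aestronglyMeasurable φ)).1 (Lp.memLp φ))
        (.of_forall fun y => sq_nonneg ‖φ y‖)
    _ = ‖φ‖ ^ 2 := (Lp_two_norm_sq_eq_integral_norm_sq φ).symm

variable (𝕜 E) in
/-- The operator `L²(Y, ν; E) → L²(X, μ; E)` induced by `weightedComp`, the weight being the
Radon–Nikodym derivative of the image of `ν|_D` under `f`. It generalizes `T_e`. -/
noncomputable def weightedCompL2 (h : IsNonsingularSection μ ν R D f g) :
    Lp E 2 ν →L[𝕜] Lp E 2 μ :=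
  LinearMap.mkContinuous
    { toFun := fun φ => (h.memLp_weightedComp (𝕜 := 𝕜) (Lp.memLp φ)).toLp _
      map_add' := fun φ ψ => by
        rw [← MemLp.toLp_add, MemLp.toLp_eq_toLp_iff, ← weightedComp_add]
        exact h.weightedComp_congr_ae _ (Lp.coeFn_add φ ψ)
      map_smul' := fun c φ => by
        rw [RingHom.id_apply, ← MemLp.toLp_const_smul, MemLp.toLp_eq_toLp_iff, ← weightedComp_smul]
        exact h.weightedComp_congr_ae _ (Lp.coeFn_smul c φ) }
    1 fun φ => (one_mul ‖φ‖).symm ▸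
      h.norm_le_of_ae_eq_weightedComp (h.memLp_weightedComp (𝕜 := 𝕜) (Lp.memLp φ)).coeFn_toLp

theorem coeFn_weightedCompL2 (h : IsNonsingularSection μ ν R D f g) (φ : Lp E 2 ν) :
    h.weightedCompL2 𝕜 E φ =ᵐ[μ] weightedComp 𝕜 (((ν.restrict D).map f).rnDeriv μ) R g φ :=
  MemLp.coeFn_toLp (h.memLp_weightedComp (Lp.memLp φ))

theorem adjoint_apply_apply_ae_eq_indicator [CompleteSpace E]
    (h : IsNonsingularSection μ ν R D f g) {T : Lp E 2 ν →L[𝕜] Lp E 2 μ}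
    (hT : ∀ φ, T φ =ᵐ[μ] weightedComp 𝕜 (((ν.restrict D).map f).rnDeriv μ) R g φ)
    (φ : Lp E 2 ν) :
    ContinuousLinearMap.adjoint T (T φ) =ᵐ[ν] D.indicator φ := by
  have memLp_indicator : MemLp (D.indicator φ) 2 ν := (Lp.memLp φ).indicator h.measurableSet_domain
  suffices ContinuousLinearMap.adjoint T (T φ) = memLp_indicator.toLp _ from
    this ▸ memLp_indicator.coeFn_toLp
  refine ext_inner_right 𝕜 fun ψ => ?_
  rw [ContinuousLinearMap.adjoint_inner_left, h.inner_eq_setIntegral_inner (hT φ) (hT ψ),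
    inner_toLp_indicator h.measurableSet_domain]

end IsNonsingularSection

theorem RelBranchingSystem.isNonsingularSection [MeasurableSpace X] {μ : Measure X}
    {r s : E1 → V0} {V : Set V0} {R : E1 → Set X} {D : V0 → Set X} {f finv : E1 → X → X}
    (hbs : RelBranchingSystem r s V μ R D f finv) (e : E1) :
    IsNonsingularSection μ μ (R e) (D (r e)) (f e) (finv e) where
  measurableSet_range := hbs.measR e
  measurableSet_domain := hbs.measD (r e)
  quasiMeasurePreserving := ⟨hbs.measf e, hbs.ac_f e⟩
  quasiMeasurePreserving_inverse := ⟨hbs.measfinv e, hbs.ac_finv e⟩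
  ae_mem_range := (ae_restrict_mem (hbs.measD (r e))).mono fun _ hy => hbs.mapsf e hy
  ae_leftInverse := hbs.inv_left e

theorem statement0_general {𝕜 Y E : Type*} [RCLike 𝕜] [NormedAddCommGroup E]
    [InnerProductSpace 𝕜 E] [CompleteSpace E] [MeasurableSpace X] [MeasurableSpace Y]
    {μ : Measure X} {ν : Measure Y} [SigmaFinite μ] [SigmaFinite ν]
    {R : Set X} {D : Set Y} {f : Y → X} {g : X → Y} (h : IsNonsingularSection μ ν R D f g) :
    (∃! T : Lp E 2 ν →L[𝕜] Lp E 2 μ,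
      ∀ φ, T φ =ᵐ[μ] weightedComp 𝕜 (((ν.restrict D).map f).rnDeriv μ) R g φ) ∧
    (∀ T : Lp E 2 ν →L[𝕜] Lp E 2 μ,
      (∀ φ, T φ =ᵐ[μ] weightedComp 𝕜 (((ν.restrict D).map f).rnDeriv μ) R g φ) →
      (∀ φ, ‖T φ‖ ^ 2 = ∫ y in D, ‖φ y‖ ^ 2 ∂ν) ∧
      (∀ φ, ContinuousLinearMap.adjoint T (T φ) =ᵐ[ν] D.indicator φ)) := by
  refine ⟨⟨h.weightedCompL2 𝕜 E, h.coeFn_weightedCompL2, fun T hT => ?_⟩, fun T hT => ⟨?_, ?_⟩⟩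
  · ext1 φ
    exact Lp.ext ((hT φ).trans (h.coeFn_weightedCompL2 φ).symm)
  · exact fun φ => h.norm_sq_eq_setIntegral_norm_sq (hT φ)
  · exact h.adjoint_apply_apply_ae_eq_indicator hT

/-- For every edge `e` there is a unique bounded operator `T_e` on
`L²(X, μ)` with `T_e φ =ᵐ χ_{R_e} · Φ_{f_e⁻¹}^{1/2} · (φ ∘ f_e⁻¹)`; moreover any such
operator satisfies `‖T_e φ‖² = ∫_{D_{r e}} |φ|² dμ` and `T_e* T_e` is multiplication by the
indicator of `D (r e)`. -/
theorem statement0 [MeasurableSpace X] {μ : Measure X} [SigmaFinite μ]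
    (r s : E1 → V0) [Fintype V0] [Fintype E1] (V : Set V0)
    (R : E1 → Set X) (D : V0 → Set X) (f finv : E1 → X → X)
    (hbs : RelBranchingSystem r s V μ R D f finv) (e : E1) :
    (∃! T : Lp ℂ 2 μ →L[ℂ] Lp ℂ 2 μ,
      ∀ φ : Lp ℂ 2 μ, ⇑(T φ) =ᵐ[μ] Taction μ (R e) (D (r e)) (f e) (finv e) ⇑φ) ∧
    (∀ T : Lp ℂ 2 μ →L[ℂ] Lp ℂ 2 μ,
      (∀ φ : Lp ℂ 2 μ, ⇑(T φ) =ᵐ[μ] Taction μ (R e) (D (r e)) (f e) (finv e) ⇑φ) →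
      (∀ φ : Lp ℂ 2 μ, ‖T φ‖ ^ 2 = ∫ x in D (r e), ‖(φ : X → ℂ) x‖ ^ 2 ∂μ) ∧
      (∀ φ : Lp ℂ 2 μ, ⇑((ContinuousLinearMap.adjoint T) (T φ)) =ᵐ[μ]
        (D (r e)).indicator fun x => (φ : X → ℂ) x)) := by
  exact statement0_general (hbs.isNonsingularSection e)

end
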